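/- On the Sasakian lift of a Kähler base, the tensor field ρ̄(·,·) = R̄ic(·, φ·) (where R̄ic is the Ricci tensor of the lift metric g^L) is a closed 2-form, and it equals ρ̄ = π₂*ρ − 2π₂*ω, the pullback of the Ricci form ρ of the Kähler base minus twice the pullback of the Kähler form ω. -/

import Mathlib

/-!
Abstract framework for (local) differential geometry, following the standard
algebraic formulation: smooth functions form a commutative `ℝ`-algebra `F`,
vector fields form an `F`-module `V` equipped with a Lie bracket and a
directional derivative (derivation) action on functions.  Metrics, connections,
curvature, Ricci tensors (via orthonormal frames), Lie derivatives, exterior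
derivatives, almost contact metric / Sasakian structures, Kähler structures,
`D_{α,β}`-homotheties, twisted `η`-Ricci solitons, and the Sasakian lift of a
Kähler base are all expressed in this language.
-/

/-- The calculus of vector fields on a manifold: a Lie bracket and a
directional-derivative action of vector fields on functions, with the usual
rules. -/
structure VectorCalculus (F : Type*) (V : Type*) [CommRing F] [Algebra ℝ F]
    [AddCommGroup V] [Module F V] where
  bracket : V → V → V
  deriv : V → F → F
  bracket_antisymm : ∀ X Y, bracket X Y = - bracket Y X
  bracket_add_left : ∀ X Y Z, bracket (X + Y) Z = bracket X Z + bracket Y Z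
  bracket_smul_left : ∀ (f : F) (X Y : V),
      bracket (f • X) Y = f • bracket X Y - deriv Y f • X
  jacobi : ∀ X Y Z,
      bracket X (bracket Y Z) + bracket Y (bracket Z X) + bracket Z (bracket X Y) = 0
  deriv_add : ∀ (X : V) (f g : F), deriv X (f + g) = deriv X f + deriv X g
  deriv_mul : ∀ (X : V) (f g : F), deriv X (f * g) = deriv X f * g + f * deriv X g
  deriv_add_left : ∀ (X Y : V) (f : F), deriv (X + Y) f = deriv X f + deriv Y f
  deriv_smul_left : ∀ (f : F) (X : V) (h : F), deriv (f • X) h = f * deriv X h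
  deriv_const : ∀ (X : V) (r : ℝ), deriv X (algebraMap ℝ F r) = 0
  deriv_bracket : ∀ (X Y : V) (f : F),
      deriv (bracket X Y) f = deriv X (deriv Y f) - deriv Y (deriv X f)

section Defs

variable {F : Type*} {V : Type*} [CommRing F] [Algebra ℝ F]
  [AddCommGroup V] [Module F V]

/-- A (pseudo-)Riemannian metric: a symmetric `F`-bilinear form on vector fields. -/
structure IsMetric (g : V → V → F) : Prop where
  symm : ∀ X Y, g X Y = g Y X
  add_left : ∀ X Y Z, g (X + Y) Z = g X Z + g Y Z
  smul_left : ∀ (f : F) (X Y : V), g (f • X) Y = f * g X Y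

/-- `nabla` is the Levi-Civita connection of the metric `g`: an affine,
torsion-free, metric-compatible connection. -/
structure IsLeviCivita (C : VectorCalculus F V) (g : V → V → F)
    (nabla : V → V → V) : Prop where
  add_left : ∀ X Y Z, nabla (X + Y) Z = nabla X Z + nabla Y Z
  smul_left : ∀ (f : F) (X Y : V), nabla (f • X) Y = f • nabla X Y
  add_right : ∀ X Y Z, nabla X (Y + Z) = nabla X Y + nabla X Z
  leibniz : ∀ (X : V) (f : F) (Y : V),
      nabla X (f • Y) = C.deriv X f • Y + f • nabla X Y
  torsion_free : ∀ X Y, nabla X Y - nabla Y X = C.bracket X Y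
  compat : ∀ X Y Z, C.deriv X (g Y Z) = g (nabla X Y) Z + g Y (nabla X Z)

/-- Riemann curvature operator `R_{X Y} Z = ∇_X ∇_Y Z - ∇_Y ∇_X Z - ∇_{[X,Y]} Z`. -/
def curv (C : VectorCalculus F V) (nabla : V → V → V) (X Y Z : V) : V :=
  nabla X (nabla Y Z) - nabla Y (nabla X Z) - nabla (C.bracket X Y) Z

/-- An orthonormal spanning frame for the metric `g`. -/
def IsOrthFrame (g : V → V → F) {m : ℕ} (E : Fin m → V) : Prop :=
  (∀ i j, g (E i) (E j) = if i = j then (1 : F) else 0) ∧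
  (∀ X : V, X = ∑ i, g X (E i) • E i)

/-- Ricci tensor, computed as the trace of the curvature in the orthonormal
frame `E`:  `Ric(Y,Z) = ∑ᵢ g(R_{Eᵢ Y} Z, Eᵢ)`. -/
def ricci (C : VectorCalculus F V) (nabla : V → V → V) {m : ℕ} (E : Fin m → V)
    (g : V → V → F) (Y Z : V) : F :=
  ∑ i, g (curv C nabla (E i) Y Z) (E i)

/-- Scalar curvature: trace of the Ricci tensor in the frame `E`. -/
def scalarCurv (C : VectorCalculus F V) (nabla : V → V → V) {m : ℕ}
    (E : Fin m → V) (g : V → V → F) : F :=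
  ∑ i, ricci C nabla E g (E i) (E i)

/-- Lie derivative of a metric (symmetric 2-tensor):
`(L_X g)(Y,Z) = X g(Y,Z) - g([X,Y],Z) - g(Y,[X,Z])`. -/
def lieDerivMetric (C : VectorCalculus F V) (X : V) (g : V → V → F) (Y Z : V) : F :=
  C.deriv X (g Y Z) - g (C.bracket X Y) Z - g Y (C.bracket X Z)

/-- Lie derivative of a 1-form: `(L_X η)(Y) = X η(Y) - η([X,Y])`. -/
def lieDerivOneForm (C : VectorCalculus F V) (X : V) (eta : V → F) (Y : V) : F :=
  C.deriv X (eta Y) - eta (C.bracket X Y)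

/-- Lie derivative of a (1,1)-tensor field: `(L_X φ)(Y) = [X, φY] - φ[X,Y]`. -/
def lieDerivEndo (C : VectorCalculus F V) (X : V) (phi : V → V) (Y : V) : V :=
  C.bracket X (phi Y) - phi (C.bracket X Y)

/-- Lie derivative of a 2-form. -/
def lieDerivTwoForm (C : VectorCalculus F V) (X : V) (Th : V → V → F) (Y Z : V) : F :=
  C.deriv X (Th Y Z) - Th (C.bracket X Y) Z - Th Y (C.bracket X Z)

/-- Exterior derivative of a 1-form (Blair's convention, with the factor `1/2`):
`dη(X,Y) = (1/2)(X η(Y) - Y η(X) - η([X,Y]))`. -/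
noncomputable def extDerivOneForm (C : VectorCalculus F V) (eta : V → F) (X Y : V) : F :=
  (1/2 : ℝ) • (C.deriv X (eta Y) - C.deriv Y (eta X) - eta (C.bracket X Y))

/-- A 1-form is closed iff `X a(Y) - Y a(X) - a([X,Y]) = 0` for all `X, Y`. -/
def IsClosedOneForm (C : VectorCalculus F V) (a : V → F) : Prop :=
  ∀ X Y, C.deriv X (a Y) - C.deriv Y (a X) - a (C.bracket X Y) = 0

/-- A 2-form is closed iff its exterior derivative vanishes. -/
def IsClosedTwoForm (C : VectorCalculus F V) (Th : V → V → F) : Prop :=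
  ∀ X Y Z,
    C.deriv X (Th Y Z) - C.deriv Y (Th X Z) + C.deriv Z (Th X Y)
      - Th (C.bracket X Y) Z + Th (C.bracket X Z) Y - Th (C.bracket Y Z) X = 0

/-- Nijenhuis torsion of a (1,1)-tensor field `S`:
`N_S(X,Y) = S²[X,Y] + [SX,SY] - S([SX,Y]) - S([X,SY])`. -/
def nijenhuis (C : VectorCalculus F V) (S : V → V) (X Y : V) : V :=
  S (S (C.bracket X Y)) + C.bracket (S X) (S Y)
    - S (C.bracket (S X) Y) - S (C.bracket X (S Y))

/-- An almost contact metric structure `(φ, ξ, η, g)`. -/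
structure IsAlmostContactMetric (phi : V → V) (xi : V) (eta : V → F)
    (g : V → V → F) : Prop where
  metric : IsMetric g
  phi_add : ∀ X Y, phi (X + Y) = phi X + phi Y
  phi_smul : ∀ (f : F) (X : V), phi (f • X) = f • phi X
  eta_add : ∀ X Y, eta (X + Y) = eta X + eta Y
  eta_smul : ∀ (f : F) (X : V), eta (f • X) = f * eta X
  phi_sq : ∀ X, phi (phi X) = -X + eta X • xi
  eta_xi : eta xi = 1
  compat : ∀ X Y, g (phi X) (phi Y) = g X Y - eta X * eta Y

/-- A Sasakian structure: an almost contact metric structure whose Levi-Civita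
connection `nabla` satisfies `(∇_X φ)Y = g(X,Y) ξ - η(Y) X`. -/
def IsSasakianWith (C : VectorCalculus F V) (phi : V → V) (xi : V) (eta : V → F)
    (g : V → V → F) (nabla : V → V → V) : Prop :=
  IsAlmostContactMetric phi xi eta g ∧ IsLeviCivita C g nabla ∧
    ∀ X Y, nabla X (phi Y) - phi (nabla X Y) = g X Y • xi - eta Y • X

/-- Symmetric tensor product of two 1-forms:
`(a ⊙ b)(Y,Z) = (1/2)(a(Y) b(Z) + a(Z) b(Y))`. -/
noncomputable def symProd (a b : V → F) (Y Z : V) : F := (1/2 : ℝ) • (a Y * b Z + a Z * b Y)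

/-- Twisted `η`-Ricci soliton with data `(X, λ, C₁, C₂)`:
`η(X) = 0` and `Ric + (1/2) L_X g = λ g + 2 C₁ (L_X η) ⊙ η + C₂ η ⊗ η`. -/
def IsTwistedEtaRicciSoliton (C : VectorCalculus F V) (g : V → V → F)
    (eta : V → F) (Ric : V → V → F) (X : V) (lam C1 C2 : ℝ) : Prop :=
  eta X = 0 ∧
  ∀ Y Z, Ric Y Z + (1/2 : ℝ) • lieDerivMetric C X g Y Z =
    lam • g Y Z + (2 * C1) • symProd (lieDerivOneForm C X eta) eta Y Z
      + C2 • (eta Y * eta Z)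

/-- A Kähler structure `(J, g)` with Levi-Civita connection `nabla`. -/
structure IsKaehler (C : VectorCalculus F V) (J : V → V) (g : V → V → F)
    (nabla : V → V → V) : Prop where
  metric : IsMetric g
  lc : IsLeviCivita C g nabla
  J_add : ∀ X Y, J (X + Y) = J X + J Y
  J_smul : ∀ (f : F) (X : V), J (f • X) = f • J X
  J_sq : ∀ X, J (J X) = -X
  hermitian : ∀ X Y, g (J X) (J Y) = g X Y
  parallel : ∀ X Y, nabla X (J Y) = J (nabla X Y)

/-- The metric of the `D_{α,β}`-homothety: `g' = α g + (β² - α) η ⊗ η`. -/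
def dHomMetric (g : V → V → F) (eta : V → F) (α β : ℝ) (X Y : V) : F :=
  α • g X Y + (β ^ 2 - α) • (eta X * eta Y)

/-- The 1-form of the `D_{α,β}`-homothety: `η' = β η`. -/
def dHomEta (eta : V → F) (β : ℝ) (X : V) : F := β • eta X

end Defs

section DefsR

variable {F : Type*} {V : Type*} [CommRing F] [Algebra ℝ F]
  [AddCommGroup V] [Module F V] [Module ℝ V] [IsScalarTower ℝ F V]

/-- The Reeb field of the `D_{α,β}`-homothety: `ξ' = (1/β) ξ`. -/
noncomputable def dHomXi (xi : V) (β : ℝ) : V := β⁻¹ • xi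

/-- A `c`-Sasakian structure (`c` a real constant): an almost contact metric
structure whose Levi-Civita connection satisfies
`(∇_X φ)Y = c (g(X,Y) ξ - η(Y) X)`. -/
def IsCSasakianWith (C : VectorCalculus F V) (phi : V → V) (xi : V)
    (eta : V → F) (g : V → V → F) (nabla : V → V → V) (c : ℝ) : Prop :=
  IsAlmostContactMetric phi xi eta g ∧ IsLeviCivita C g nabla ∧
    ∀ X Y, nabla X (phi Y) - phi (nabla X Y) = c • (g X Y • xi - eta Y • X)

end DefsR

/-- The Sasakian lift of a Kähler base `(N, J, g)` to `M = ℝ × N`, presented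
axiomatically:  `liftF` is the pullback of functions along `π₂`, `liftV` is the
lift of vector fields `X ↦ X^L = X - (τ(X)∘π₂) ξ`, `ξ = ∂_t`, `η = dt + π₂*τ`,
`φ X^L = (JX)^L`, `φ ξ = 0`, `g^L = η ⊗ η + π₂* g`.  The structure fields
record exactly the identities satisfied by this construction. -/
structure SasakianLiftData
    {Fb : Type*} {Vb : Type*} [CommRing Fb] [Algebra ℝ Fb]
    [AddCommGroup Vb] [Module Fb Vb]
    {Fm : Type*} {Vm : Type*} [CommRing Fm] [Algebra ℝ Fm]
    [AddCommGroup Vm] [Module Fm Vm]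
    (Cb : VectorCalculus Fb Vb) (Cm : VectorCalculus Fm Vm)
    (J : Vb → Vb) (gb : Vb → Vb → Fb) where
  liftF : Fb →ₐ[ℝ] Fm
  liftV : Vb → Vm
  xi : Vm
  eta : Vm → Fm
  phi : Vm → Vm
  gL : Vm → Vm → Fm
  liftV_add : ∀ X Y, liftV (X + Y) = liftV X + liftV Y
  liftV_smul : ∀ (f : Fb) (X : Vb), liftV (f • X) = liftF f • liftV X
  eta_add : ∀ W W', eta (W + W') = eta W + eta W'
  eta_smul : ∀ (f : Fm) (W : Vm), eta (f • W) = f * eta W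
  phi_add : ∀ W W', phi (W + W') = phi W + phi W'
  phi_smul : ∀ (f : Fm) (W : Vm), phi (f • W) = f • phi W
  gL_metric : IsMetric gL
  eta_xi : eta xi = 1
  eta_lift : ∀ X, eta (liftV X) = 0
  phi_lift : ∀ X, phi (liftV X) = liftV (J X)
  phi_xi : phi xi = 0
  gL_lift : ∀ X Y, gL (liftV X) (liftV Y) = liftF (gb X Y)
  gL_xi : ∀ W, gL xi W = eta W
  bracket_lift : ∀ X Y, Cm.bracket (liftV X) (liftV Y)
      = liftV (Cb.bracket X Y) - ((2 : Fm) * liftF (gb X (J Y))) • xi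
  bracket_xi_lift : ∀ X, Cm.bracket xi (liftV X) = 0
  deriv_lift : ∀ (X : Vb) (f : Fb),
      Cm.deriv (liftV X) (liftF f) = liftF (Cb.deriv X f)
  deriv_xi : ∀ f : Fb, Cm.deriv xi (liftF f) = 0
  spanning : ∀ W : Vm, ∃ (k : ℕ) (a : Fin k → Fm) (X : Fin k → Vb),
      W = eta W • xi + ∑ i, a i • liftV (X i)

/-!
The Koszul formula gives `∇_{X^L} Y^L = (∇_X Y)^L - ω(X, Y) ξ` and
`∇_{X^L} ξ = ∇_ξ X^L = -(J X)^L`, hence a formula for the curvature of the lift in which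
only horizontal terms survive, as `ω` is parallel. Tracing it over the frame formed by `ξ`
and the lift of a frame of the base gives `Ric(Y^L, Z^L) = Ric(Y, Z) - 2 g(Y, Z)`: the three
curvature corrections contribute `0`, `-1` and `-2`, and the direction `ξ` contributes `1`.

So `ρ̄` is the pullback of `ρ - 2 ω`, and it suffices that both forms on the base are closed. For
`ω` this is parallelism. By the first Bianchi identity `ρ(X, Y) = -½ tr(R_{X Y} ∘ J)`, and since
`J` is parallel the second Bianchi identity shows that this trace is closed. The trace commutes
with derivatives in any frame satisfying `X = ∑ᵢ g(X, Eᵢ) Eᵢ`: differentiating this identity shows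
that the terms in which the frame is differentiated cancel.
-/

section Metric

variable {F V : Type*} [CommRing F] [AddCommGroup V] [Module F V] {g : V → V → F}

namespace IsMetric

theorem add_right (hg : IsMetric g) (X Y Z : V) : g X (Y + Z) = g X Y + g X Z := by
  rw [hg.symm, hg.add_left, hg.symm Y, hg.symm Z]

theorem smul_right (hg : IsMetric g) (f : F) (X Y : V) : g X (f • Y) = f * g X Y := by
  rw [hg.symm, hg.smul_left, hg.symm Y]

/-- A metric as a bilinear form of Mathlib, giving access to the `map_*` lemmas. -/
def toBilin (hg : IsMetric g) : LinearMap.BilinForm F V :=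
  LinearMap.mk₂ F g hg.add_left hg.smul_left (fun X Y Z => hg.add_right X Y Z)
    fun f X Y => hg.smul_right f X Y

theorem zero_left (hg : IsMetric g) (Y : V) : g 0 Y = 0 :=
  hg.toBilin.map_zero₂ Y

theorem neg_left (hg : IsMetric g) (X Y : V) : g (-X) Y = -g X Y :=
  hg.toBilin.map_neg₂ X Y

theorem neg_right (hg : IsMetric g) (X Y : V) : g X (-Y) = -g X Y :=
  (hg.toBilin X).map_neg Y

theorem sub_left (hg : IsMetric g) (X Y Z : V) : g (X - Y) Z = g X Z - g Y Z :=
  hg.toBilin.map_sub₂ X Y Z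

theorem sum_left (hg : IsMetric g) {ι : Type*} (s : Finset ι) (X : ι → V) (Y : V) :
    g (∑ i ∈ s, X i) Y = ∑ i ∈ s, g (X i) Y :=
  hg.toBilin.map_sum₂ s X Y

end IsMetric

/-- A Parseval frame: a family reproducing every vector field `X` as `∑ᵢ g(X, Eᵢ) Eᵢ`. Traces may
be computed in it as in an orthonormal frame, but it need not be linearly independent, so that it
exists globally also where the tangent bundle is not trivial. -/
def IsParsevalFrame {ι : Type*} [Fintype ι] (g : V → V → F) (E : ι → V) : Prop :=
  ∀ X, X = ∑ i, g X (E i) • E i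

/-- The trace `∑ᵢ g(T Eᵢ, Eᵢ)` of an endomorphism `T`, computed in the frame `E`. -/
def frameTrace {ι : Type*} [Fintype ι] (g : V → V → F) (E : ι → V) (T : V →ₗ[F] V) : F :=
  ∑ i, g (T (E i)) (E i)

theorem frameTrace_add (hg : IsMetric g) {ι : Type*} [Fintype ι] (E : ι → V) (S T : V →ₗ[F] V) :
    frameTrace g E (S + T) = frameTrace g E S + frameTrace g E T := by
  simp only [frameTrace, LinearMap.add_apply, hg.add_left, Finset.sum_add_distrib]

theorem frameTrace_sub (hg : IsMetric g) {ι : Type*} [Fintype ι] (E : ι → V) (S T : V →ₗ[F] V) :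
    frameTrace g E (S - T) = frameTrace g E S - frameTrace g E T := by
  simp only [frameTrace, LinearMap.sub_apply, hg.sub_left, Finset.sum_sub_distrib]

namespace IsParsevalFrame

variable {ι κ : Type*} [Fintype ι] [Fintype κ] {E : ι → V} {B : κ → V}

theorem map_eq_sum (hE : IsParsevalFrame g E) {M : Type*} [AddCommGroup M] [Module F M]
    (T : V →ₗ[F] M) (X : V) : T X = ∑ i, g X (E i) • T (E i) := by
  conv_lhs => rw [hE X]
  simp only [map_sum, map_smul]

theorem sum_mul (hE : IsParsevalFrame g E) (hg : IsMetric g) (X Y : V) :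
    ∑ i, g (E i) Y * g X (E i) = g X Y := by
  conv_rhs => rw [hE X, hg.sum_left]
  simp only [hg.smul_left, mul_comm]

theorem separatingLeft (hE : IsParsevalFrame g E) (hg : IsMetric g) :
    hg.toBilin.SeparatingLeft := fun X hX => by
  rw [hE X]
  exact Finset.sum_eq_zero fun i _ => by rw [show g X (E i) = 0 from hX (E i), zero_smul]

theorem frameTrace_comp (hB : IsParsevalFrame g B) (hg : IsMetric g) (S T : V →ₗ[F] V) :
    frameTrace g E (S ∘ₗ T) = ∑ i, ∑ k, g (T (E i)) (B k) * g (S (B k)) (E i) :=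
  Finset.sum_congr rfl fun i _ => by
    rw [LinearMap.comp_apply, hB.map_eq_sum S, hg.sum_left]
    simp only [hg.smul_left]

theorem frameTrace_comp_comm (hE : IsParsevalFrame g E) (hB : IsParsevalFrame g B)
    (hg : IsMetric g) (S T : V →ₗ[F] V) :
    frameTrace g E (S ∘ₗ T) = frameTrace g B (T ∘ₗ S) := by
  rw [hB.frameTrace_comp hg, hE.frameTrace_comp hg, Finset.sum_comm]
  simp only [mul_comm]

theorem frameTrace_eq (hE : IsParsevalFrame g E) (hB : IsParsevalFrame g B) (hg : IsMetric g)
    (T : V →ₗ[F] V) : frameTrace g E T = frameTrace g B T := by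
  simpa only [LinearMap.comp_id, LinearMap.id_comp] using
    hE.frameTrace_comp_comm hB hg T LinearMap.id

end IsParsevalFrame

end Metric

section Calculus

variable {F V : Type*} [CommRing F] [Algebra ℝ F] [AddCommGroup V] [Module F V]

variable (F) in
theorem isUnit_two_of_algebra_real : IsUnit (2 : F) := by
  simpa only [map_ofNat] using (IsUnit.mk0 (2 : ℝ) two_ne_zero).map (algebraMap ℝ F)

namespace VectorCalculus

variable (C : VectorCalculus F V)

/-- The directional derivative along `X` as a derivation of the algebra of functions. -/
def derivation (X : V) : Derivation ℝ F F :=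
  Derivation.mk'
    { toFun := C.deriv X
      map_add' := C.deriv_add X
      map_smul' := fun r f => by
        simp only [Algebra.smul_def, C.deriv_mul, C.deriv_const, zero_mul, zero_add,
          RingHom.id_apply] }
    fun f k => by
      simp only [LinearMap.coe_mk, AddHom.coe_mk, C.deriv_mul, smul_eq_mul]
      ring

theorem deriv_zero (X : V) : C.deriv X 0 = 0 :=
  (C.derivation X).map_zero

theorem deriv_one (X : V) : C.deriv X 1 = 0 :=
  (C.derivation X).map_one_eq_zero

theorem deriv_neg (X : V) (f : F) : C.deriv X (-f) = -C.deriv X f :=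
  (C.derivation X).map_neg f

theorem deriv_sub (X : V) (f k : F) : C.deriv X (f - k) = C.deriv X f - C.deriv X k :=
  (C.derivation X).map_sub f k

theorem deriv_real_smul (X : V) (r : ℝ) (f : F) : C.deriv X (r • f) = r • C.deriv X f :=
  (C.derivation X).map_smul r f

theorem deriv_sum (X : V) {ι : Type*} (s : Finset ι) (f : ι → F) :
    C.deriv X (∑ i ∈ s, f i) = ∑ i ∈ s, C.deriv X (f i) :=
  map_sum (C.derivation X) f s

theorem bracket_self (X : V) : C.bracket X X = 0 :=
  (isUnit_two_of_algebra_real F).smul_eq_zero.1 <| by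
    rw [two_smul, ← eq_neg_iff_add_eq_zero]
    exact C.bracket_antisymm X X

theorem bracket_neg_left (X Y : V) : C.bracket (-X) Y = -C.bracket X Y := by
  simpa only [neg_smul, one_smul, C.deriv_neg, C.deriv_one, neg_zero, zero_smul, sub_zero] using
    C.bracket_smul_left (-1) X Y

theorem jacobi_left (X Y Z : V) :
    C.bracket (C.bracket X Y) Z - C.bracket (C.bracket X Z) Y + C.bracket (C.bracket Y Z) X =
      0 := by
  have jacobi := C.jacobi X Y Z
  rw [C.bracket_antisymm X (C.bracket Y Z), C.bracket_antisymm Y (C.bracket Z X),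
    C.bracket_antisymm Z (C.bracket X Y), C.bracket_antisymm Z X, C.bracket_neg_left,
    neg_neg] at jacobi
  rw [← neg_eq_zero, ← jacobi]
  abel

end VectorCalculus

namespace IsClosedTwoForm

variable {C : VectorCalculus F V} {Θ Θ' : V → V → F}

theorem sub (h : IsClosedTwoForm C Θ) (h' : IsClosedTwoForm C Θ') :
    IsClosedTwoForm C fun X Y => Θ X Y - Θ' X Y := fun X Y Z => by
  simp only [C.deriv_sub]
  linear_combination h X Y Z - h' X Y Z

theorem real_smul (h : IsClosedTwoForm C Θ) (r : ℝ) :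
    IsClosedTwoForm C fun X Y => r • Θ X Y := fun X Y Z => by
  simp only [C.deriv_real_smul, ← smul_sub, ← smul_add, h X Y Z, smul_zero]

end IsClosedTwoForm

/-- The exterior derivative of a 2-form, in the normalization of `IsClosedTwoForm`. -/
def extDerivTwoForm (C : VectorCalculus F V) (Θ : V → V → F) (X Y Z : V) : F :=
  C.deriv X (Θ Y Z) - C.deriv Y (Θ X Z) + C.deriv Z (Θ X Y)
    - Θ (C.bracket X Y) Z + Θ (C.bracket X Z) Y - Θ (C.bracket Y Z) X

section TwoForm

variable (C : VectorCalculus F V) {Θ : LinearMap.BilinForm F V}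

theorem extDerivTwoForm_cyclic (hΘ : ∀ X Y, Θ X Y = -Θ Y X) (X Y Z : V) :
    extDerivTwoForm C (fun X Y => Θ X Y) X Y Z = extDerivTwoForm C (fun X Y => Θ X Y) Y Z X := by
  simp only [extDerivTwoForm]
  rw [hΘ X Z, hΘ X Y, C.bracket_antisymm X Z, C.bracket_antisymm Y X, C.deriv_neg, C.deriv_neg,
    LinearMap.map_neg₂, LinearMap.map_neg₂]
  ring

theorem extDerivTwoForm_add_left (X X' Y Z : V) :
    extDerivTwoForm C (fun X Y => Θ X Y) (X + X') Y Z =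
      extDerivTwoForm C (fun X Y => Θ X Y) X Y Z +
        extDerivTwoForm C (fun X Y => Θ X Y) X' Y Z := by
  simp only [extDerivTwoForm, map_add, LinearMap.add_apply, C.deriv_add, C.deriv_add_left,
    C.bracket_add_left]
  ring

theorem extDerivTwoForm_smul_left (hΘ : ∀ X Y, Θ X Y = -Θ Y X) (f : F) (X Y Z : V) :
    extDerivTwoForm C (fun X Y => Θ X Y) (f • X) Y Z =
      f * extDerivTwoForm C (fun X Y => Θ X Y) X Y Z := by
  simp only [extDerivTwoForm, map_smul, map_sub, LinearMap.smul_apply, LinearMap.sub_apply,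
    smul_eq_mul, C.deriv_mul, C.deriv_smul_left, C.bracket_smul_left]
  rw [hΘ X Z, hΘ X Y, C.deriv_neg, C.deriv_neg]
  ring

theorem extDerivTwoForm_eq_zero_of_span (hΘ : ∀ X Y, Θ X Y = -Θ Y X) {S : Set V}
    (hS : Submodule.span F S = ⊤) {Y Z : V}
    (h : ∀ X ∈ S, extDerivTwoForm C (fun X Y => Θ X Y) X Y Z = 0) (X : V) :
    extDerivTwoForm C (fun X Y => Θ X Y) X Y Z = 0 := by
  let d : V →ₗ[F] F :=
    { toFun := fun X => extDerivTwoForm C (fun X Y => Θ X Y) X Y Z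
      map_add' := fun X X' => extDerivTwoForm_add_left C X X' Y Z
      map_smul' := fun f X => extDerivTwoForm_smul_left C hΘ f X Y Z }
  exact LinearMap.congr_fun (LinearMap.ext_on hS (f := d) (g := 0) h) X

theorem isClosedTwoForm_of_span (hΘ : ∀ X Y, Θ X Y = -Θ Y X) {S : Set V}
    (hS : Submodule.span F S = ⊤)
    (h : ∀ X ∈ S, ∀ Y ∈ S, ∀ Z ∈ S, extDerivTwoForm C (fun X Y => Θ X Y) X Y Z = 0) :
    IsClosedTwoForm C fun X Y => Θ X Y := by
  have cyc := extDerivTwoForm_cyclic C hΘ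
  have ext {Y Z : V} := extDerivTwoForm_eq_zero_of_span C hΘ hS (Y := Y) (Z := Z)
  have h₁ : ∀ X, ∀ Y ∈ S, ∀ Z ∈ S, extDerivTwoForm C (fun X Y => Θ X Y) X Y Z = 0 :=
    fun X Y hY Z hZ => ext (fun X hX => h X hX Y hY Z hZ) X
  have h₂ : ∀ X Y, ∀ Z ∈ S, extDerivTwoForm C (fun X Y => Θ X Y) X Y Z = 0 := fun X Y Z hZ =>
    (cyc X Y Z).trans (ext (fun Y hY => (cyc X Y Z).symm.trans (h₁ X Y hY Z hZ)) Y)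
  exact fun X Y Z =>
    ((cyc Z X Y).symm.trans (ext (fun Z hZ => (cyc Z X Y).trans (h₂ X Y Z hZ)) Z))

end TwoForm

namespace IsLeviCivita

variable {C : VectorCalculus F V} {g : V → V → F} {nabla : V → V → V}

/-- The covariant derivative of vector fields along `X` as an additive map. -/
def nablaHom (h : IsLeviCivita C g nabla) (X : V) : V →+ V :=
  AddMonoidHom.mk' (nabla X) (h.add_right X)

theorem zero_left (h : IsLeviCivita C g nabla) (Y : V) : nabla 0 Y = 0 := by
  simpa only [zero_smul] using h.smul_left 0 0 Y

theorem neg_left (h : IsLeviCivita C g nabla) (X Y : V) : nabla (-X) Y = -nabla X Y := by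
  simpa only [neg_smul, one_smul] using h.smul_left (-1) X Y

theorem sub_left (h : IsLeviCivita C g nabla) (X Y Z : V) :
    nabla (X - Y) Z = nabla X Z - nabla Y Z := by
  rw [sub_eq_add_neg, h.add_left, h.neg_left, sub_eq_add_neg]

theorem neg_right (h : IsLeviCivita C g nabla) (X Y : V) : nabla X (-Y) = -nabla X Y :=
  map_neg (h.nablaHom X) Y

theorem sub_right (h : IsLeviCivita C g nabla) (X Y Z : V) :
    nabla X (Y - Z) = nabla X Y - nabla X Z :=
  map_sub (h.nablaHom X) Y Z

theorem sum_right (h : IsLeviCivita C g nabla) (X : V) {ι : Type*} (s : Finset ι) (Y : ι → V) :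
    nabla X (∑ i ∈ s, Y i) = ∑ i ∈ s, nabla X (Y i) :=
  map_sum (h.nablaHom X) Y s

theorem koszul (h : IsLeviCivita C g nabla) (hg : IsMetric g) (X Y Z : V) :
    2 * g (nabla X Y) Z = C.deriv X (g Y Z) + C.deriv Y (g X Z) - C.deriv Z (g X Y)
      + g (C.bracket X Y) Z - g (C.bracket X Z) Y - g (C.bracket Y Z) X := by
  simp only [h.compat, ← h.torsion_free, hg.sub_left]
  rw [hg.symm Y (nabla X Z), hg.symm X (nabla Y Z), hg.symm X (nabla Z Y)]
  ring

theorem curv_swap (h : IsLeviCivita C g nabla) (X Y Z : V) :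
    curv C nabla X Y Z = -curv C nabla Y X Z := by
  rw [curv, curv, C.bracket_antisymm X Y, h.neg_left]
  abel

theorem curv_add_left (h : IsLeviCivita C g nabla) (X X' Y Z : V) :
    curv C nabla (X + X') Y Z = curv C nabla X Y Z + curv C nabla X' Y Z := by
  simp only [curv, C.bracket_add_left, h.add_left, h.add_right]
  abel

theorem curv_smul_left (h : IsLeviCivita C g nabla) (f : F) (X Y Z : V) :
    curv C nabla (f • X) Y Z = f • curv C nabla X Y Z := by
  simp only [curv, C.bracket_smul_left, h.smul_left, h.sub_left, h.leibniz]
  module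

theorem curv_add_right (h : IsLeviCivita C g nabla) (X Y Z Z' : V) :
    curv C nabla X Y (Z + Z') = curv C nabla X Y Z + curv C nabla X Y Z' := by
  simp only [curv, h.add_right]
  abel

theorem curv_smul_right (h : IsLeviCivita C g nabla) (f : F) (X Y Z : V) :
    curv C nabla X Y (f • Z) = f • curv C nabla X Y Z := by
  simp only [curv, h.leibniz, h.add_right, C.deriv_bracket]
  module

/-- The curvature as a tensor: the trilinear map `X, Y, Z ↦ R_{X Y} Z`. -/
def curvature (h : IsLeviCivita C g nabla) : V →ₗ[F] V →ₗ[F] V →ₗ[F] V :=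
  LinearMap.mk₂ F
    (fun X Y =>
      { toFun := curv C nabla X Y
        map_add' := h.curv_add_right X Y
        map_smul' := fun f => h.curv_smul_right f X Y })
    (fun X X' Y => LinearMap.ext (h.curv_add_left X X' Y))
    (fun f X Y => LinearMap.ext (h.curv_smul_left f X Y))
    (fun X Y Y' => LinearMap.ext fun Z => by
      simp only [LinearMap.coe_mk, AddHom.coe_mk, LinearMap.add_apply]
      rw [h.curv_swap, h.curv_add_left, h.curv_swap Y, h.curv_swap Y']
      abel)
    fun f X Y => LinearMap.ext fun Z => by
      simp only [LinearMap.coe_mk, AddHom.coe_mk, LinearMap.smul_apply]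
      rw [h.curv_swap, h.curv_smul_left, h.curv_swap X, smul_neg]

theorem curvature_apply (h : IsLeviCivita C g nabla) (X Y Z : V) :
    h.curvature X Y Z = curv C nabla X Y Z :=
  rfl

theorem bianchi_first (h : IsLeviCivita C g nabla) (X Y Z : V) :
    curv C nabla X Y Z + curv C nabla Y Z X + curv C nabla Z X Y = 0 := by
  rw [← C.jacobi X Y Z]
  simp only [curv, ← h.torsion_free, h.sub_right, h.sub_left]
  abel

theorem metric_curv_skew (h : IsLeviCivita C g nabla) (hg : IsMetric g) (X Y Z W : V) :
    g (curv C nabla X Y Z) W = -g (curv C nabla X Y W) Z := by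
  have deriv_metric := C.deriv_bracket X Y (g Z W)
  simp only [h.compat, C.deriv_add] at deriv_metric
  rw [hg.symm Z (nabla (C.bracket X Y) W), hg.symm Z (nabla X (nabla Y W)),
    hg.symm Z (nabla Y (nabla X W)), hg.symm (nabla X Z), hg.symm (nabla Y Z)] at deriv_metric
  simp only [curv, hg.sub_left]
  linear_combination -deriv_metric

theorem metric_curv_pair_symm (h : IsLeviCivita C g nabla) (hg : IsMetric g) (X Y Z W : V) :
    g (curv C nabla X Y Z) W = g (curv C nabla Z W X) Y := by
  have swap (X Y Z W : V) : g (curv C nabla X Y Z) W = -g (curv C nabla Y X Z) W := by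
    rw [h.curv_swap, hg.neg_left]
  have skew := h.metric_curv_skew hg
  have bianchi (X Y Z W : V) : g (curv C nabla X Y Z) W + g (curv C nabla Y Z X) W
      + g (curv C nabla Z X Y) W = 0 := by
    rw [← hg.add_left, ← hg.add_left, h.bianchi_first, hg.zero_left]
  apply (isUnit_two_of_algebra_real F).mul_left_cancel
  -- Milnor's octahedron: in a signed sum of the first Bianchi identities of the four faces, all
  -- terms cancel in pairs by `swap` and `skew` except the two in the claim, which double.
  linear_combination bianchi X Y Z W + bianchi Y Z W X - bianchi Z W X Y - bianchi W X Y Z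
    - skew Y Z W X - skew Z W Y X - swap W Y Z X
    + swap W X Z Y - skew X W Z Y + swap X Z W Y - skew Z X W Y
    + swap W X Y Z + skew X Y W Z + skew Y W X Z

/-- The covariant derivative `∇_X T = [∇_X, T]` of an endomorphism field `T`. -/
def covDeriv (h : IsLeviCivita C g nabla) (X : V) (T : V →ₗ[F] V) : V →ₗ[F] V where
  toFun Y := nabla X (T Y) - T (nabla X Y)
  map_add' Y Z := by
    simp only [map_add, h.add_right]
    abel
  map_smul' f Y := by
    simp only [map_smul, map_add, h.leibniz, RingHom.id_apply]
    module

theorem covDeriv_apply (h : IsLeviCivita C g nabla) (X : V) (T : V →ₗ[F] V) (Y : V) :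
    h.covDeriv X T Y = nabla X (T Y) - T (nabla X Y) :=
  rfl

theorem covDeriv_comp (h : IsLeviCivita C g nabla) (X : V) (S T : V →ₗ[F] V) :
    h.covDeriv X (S ∘ₗ T) = h.covDeriv X S ∘ₗ T + S ∘ₗ h.covDeriv X T :=
  LinearMap.ext fun Y => by
    simp only [covDeriv_apply, LinearMap.comp_apply, LinearMap.add_apply, map_sub]
    abel

theorem bianchi_second (h : IsLeviCivita C g nabla) (X Y Z : V) :
    h.covDeriv X (h.curvature Y Z) - h.covDeriv Y (h.curvature X Z)
        + h.covDeriv Z (h.curvature X Y) =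
      h.curvature (C.bracket X Y) Z - h.curvature (C.bracket X Z) Y
        + h.curvature (C.bracket Y Z) X := by
  ext U
  have jacobi := congrArg (fun W => nabla W U) (C.jacobi_left X Y Z)
  simp only [h.add_left, h.sub_left, h.zero_left] at jacobi
  simp only [LinearMap.add_apply, LinearMap.sub_apply, covDeriv_apply, curvature_apply, curv,
    h.sub_right]
  rw [← sub_eq_zero, ← jacobi]
  abel

theorem sum_nabla_frame (h : IsLeviCivita C g nabla) {ι : Type*} [Fintype ι] {E : ι → V}
    (hE : IsParsevalFrame g E) (X Y : V) :
    ∑ i, (g Y (nabla X (E i)) • E i + g Y (E i) • nabla X (E i)) = 0 := by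
  have nabla_eq : nabla X Y = ∑ i, g (nabla X Y) (E i) • E i
      + ∑ i, (g Y (nabla X (E i)) • E i + g Y (E i) • nabla X (E i)) := by
    conv_lhs => rw [hE Y, h.sum_right]
    simp only [h.leibniz, h.compat, add_smul, add_assoc, Finset.sum_add_distrib]
  rwa [← hE (nabla X Y), left_eq_add] at nabla_eq

theorem deriv_frameTrace (h : IsLeviCivita C g nabla) (hg : IsMetric g) {ι : Type*} [Fintype ι]
    {E : ι → V} (hE : IsParsevalFrame g E) (T : V →ₗ[F] V) (X : V) :
    C.deriv X (frameTrace g E T) = frameTrace g E (h.covDeriv X T) := by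
  have frame_terms : ∑ i, (g (T (E i)) (nabla X (E i)) + g (T (nabla X (E i))) (E i)) = 0 :=
    calc
      _ = ∑ i, ∑ j, (g (E j) (nabla X (E i)) * g (T (E i)) (E j)
            + g (E j) (E i) * g (T (nabla X (E i))) (E j)) := by
        simp only [Finset.sum_add_distrib, hE.sum_mul hg]
      _ = ∑ j, g (T (∑ i, (g (E j) (nabla X (E i)) • E i
            + g (E j) (E i) • nabla X (E i)))) (E j) := by
        rw [Finset.sum_comm]
        simp only [map_sum, map_add, map_smul, hg.sum_left, hg.add_left, hg.smul_left]
      _ = 0 := by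
        simp only [h.sum_nabla_frame hE, map_zero, hg.zero_left, Finset.sum_const_zero]
  simp only [Finset.sum_add_distrib] at frame_terms
  simp only [frameTrace, C.deriv_sum, h.compat, covDeriv_apply, hg.sub_left,
    Finset.sum_add_distrib, Finset.sum_sub_distrib]
  linear_combination frame_terms

theorem isClosedTwoForm_frameTrace_curvature_comp (h : IsLeviCivita C g nabla) (hg : IsMetric g)
    {ι : Type*} [Fintype ι] {E : ι → V} (hE : IsParsevalFrame g E) {T : V →ₗ[F] V}
    (hT : ∀ X, h.covDeriv X T = 0) :
    IsClosedTwoForm C fun X Y => frameTrace g E (h.curvature X Y ∘ₗ T) := fun X Y Z => by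
  have bianchi := congrArg (fun S => frameTrace g E (S ∘ₗ T)) (h.bianchi_second X Y Z)
  simp only [LinearMap.add_comp, LinearMap.sub_comp, frameTrace_add hg, frameTrace_sub hg]
    at bianchi
  simp only [h.deriv_frameTrace hg hE, h.covDeriv_comp, hT, LinearMap.comp_zero, add_zero]
  linear_combination bianchi

theorem isClosedTwoForm_of_parallel (h : IsLeviCivita C g nabla) {Θ : LinearMap.BilinForm F V}
    (hΘ : ∀ X Y, Θ X Y = -Θ Y X)
    (hpar : ∀ X Y Z, C.deriv X (Θ Y Z) = Θ (nabla X Y) Z + Θ Y (nabla X Z)) :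
    IsClosedTwoForm C fun X Y => Θ X Y := fun X Y Z => by
  simp only [hpar, ← h.torsion_free, map_sub, LinearMap.sub_apply]
  linear_combination hΘ Y (nabla X Z) - hΘ X (nabla Y Z) + hΘ X (nabla Z Y)

section Ricci

variable {m : ℕ} {E : Fin m → V}

/-- The endomorphism `U ↦ R_{U Y} Z`, whose trace is `Ric(Y, Z)`. -/
def ricciEndo (h : IsLeviCivita C g nabla) (Y Z : V) : V →ₗ[F] V :=
  (h.curvature.flip Y).flip Z

theorem ricci_eq_frameTrace (h : IsLeviCivita C g nabla) (E : Fin m → V) (Y Z : V) :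
    ricci C nabla E g Y Z = frameTrace g E (h.ricciEndo Y Z) :=
  rfl

/-- The Ricci tensor as a bilinear form of Mathlib. -/
def ricciForm (h : IsLeviCivita C g nabla) (hg : IsMetric g) (E : Fin m → V) :
    LinearMap.BilinForm F V :=
  ∑ i, (h.curvature (E i)).compr₂ (hg.toBilin.flip (E i))

theorem ricciForm_apply (h : IsLeviCivita C g nabla) (hg : IsMetric g) (E : Fin m → V)
    (Y Z : V) :
    h.ricciForm hg E Y Z = ricci C nabla E g Y Z := by
  simp only [ricciForm, LinearMap.sum_apply]
  rfl

theorem ricci_symm (h : IsLeviCivita C g nabla) (hg : IsMetric g) (E : Fin m → V) (Y Z : V) :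
    ricci C nabla E g Y Z = ricci C nabla E g Z Y :=
  Finset.sum_congr rfl fun i _ => by
    rw [h.metric_curv_pair_symm hg, h.curv_swap, hg.neg_left, h.metric_curv_skew hg, neg_neg]

end Ricci

end IsLeviCivita

namespace IsKaehler

variable {C : VectorCalculus F V} {J : V → V} {g : V → V → F} {nabla : V → V → V}

/-- The complex structure `J` as an endomorphism of the module of vector fields. -/
def complexStructure (hK : IsKaehler C J g nabla) : V →ₗ[F] V where
  toFun := J
  map_add' := hK.J_add
  map_smul' := hK.J_smul

theorem J_sub (hK : IsKaehler C J g nabla) (X Y : V) : J (X - Y) = J X - J Y :=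
  hK.complexStructure.map_sub X Y

theorem metric_J_right (hK : IsKaehler C J g nabla) (X Y : V) : g X (J Y) = -g (J X) Y := by
  rw [← hK.hermitian X (J Y), hK.J_sq, hK.metric.neg_right]

theorem kaehlerForm_skew (hK : IsKaehler C J g nabla) (X Y : V) : g X (J Y) = -g Y (J X) := by
  rw [hK.metric_J_right, hK.metric.symm]

theorem metric_J_self (hK : IsKaehler C J g nabla) (X : V) : g (J X) X = 0 :=
  (isUnit_two_of_algebra_real F).mul_right_eq_zero.1 <| by
    rw [two_mul, ← eq_neg_iff_add_eq_zero, ← hK.metric_J_right, hK.metric.symm]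

theorem deriv_kaehlerForm (hK : IsKaehler C J g nabla) (X Y Z : V) :
    C.deriv X (g Y (J Z)) = g (nabla X Y) (J Z) + g Y (J (nabla X Z)) := by
  rw [hK.lc.compat, hK.parallel]

theorem isClosedTwoForm_kaehlerForm (hK : IsKaehler C J g nabla) :
    IsClosedTwoForm C fun X Y => g X (J Y) :=
  hK.lc.isClosedTwoForm_of_parallel (Θ := hK.metric.toBilin.compl₂ hK.complexStructure)
    hK.kaehlerForm_skew hK.deriv_kaehlerForm

theorem covDeriv_complexStructure (hK : IsKaehler C J g nabla) (X : V) :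
    hK.lc.covDeriv X hK.complexStructure = 0 :=
  LinearMap.ext fun Y => sub_eq_zero.2 (hK.parallel X Y)

theorem curv_J (hK : IsKaehler C J g nabla) (X Y Z : V) :
    curv C nabla X Y (J Z) = J (curv C nabla X Y Z) := by
  simp only [curv, hK.parallel, hK.J_sub]

theorem metric_curv_J_J (hK : IsKaehler C J g nabla) (X Y Z W : V) :
    g (curv C nabla (J X) (J Y) Z) W = g (curv C nabla X Y Z) W := by
  rw [hK.lc.metric_curv_pair_symm hK.metric, hK.curv_J, hK.hermitian,
    hK.lc.metric_curv_pair_symm hK.metric]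

variable {m : ℕ} {E : Fin m → V}

theorem frameTrace_ricciEndo_comp_J (hK : IsKaehler C J g nabla) (hE : IsParsevalFrame g E)
    (X Y : V) :
    frameTrace g E (hK.lc.ricciEndo X Y ∘ₗ hK.complexStructure) = ricci C nabla E g X (J Y) :=
  calc
    _ = frameTrace g E (hK.complexStructure ∘ₗ hK.lc.ricciEndo X Y) :=
      hE.frameTrace_comp_comm hE hK.metric _ _
    _ = ricci C nabla E g X (J Y) :=
      Finset.sum_congr rfl fun i _ => congrArg (g · (E i)) (hK.curv_J (E i) X Y).symm

theorem ricci_J_J (hK : IsKaehler C J g nabla) (hE : IsParsevalFrame g E) (X Y : V) :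
    ricci C nabla E g (J X) (J Y) = ricci C nabla E g X Y := by
  rw [← hK.frameTrace_ricciEndo_comp_J hE]
  exact Finset.sum_congr rfl fun i _ => hK.metric_curv_J_J (E i) X Y (E i)

theorem ricciForm_skew (hK : IsKaehler C J g nabla) (hE : IsParsevalFrame g E) (X Y : V) :
    ricci C nabla E g X (J Y) = -ricci C nabla E g Y (J X) := by
  rw [← hK.ricci_J_J hE, hK.J_sq, ← hK.lc.ricciForm_apply hK.metric, map_neg,
    hK.lc.ricciForm_apply, hK.lc.ricci_symm hK.metric]

theorem ricci_J_eq_frameTrace (hK : IsKaehler C J g nabla) (hE : IsParsevalFrame g E) (X Y : V) :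
    ricci C nabla E g X (J Y) =
      (-1 / 2 : ℝ) • frameTrace g E (hK.lc.curvature X Y ∘ₗ hK.complexStructure) := by
  have bianchi : hK.lc.curvature X Y ∘ₗ hK.complexStructure =
      hK.lc.ricciEndo Y X ∘ₗ hK.complexStructure - hK.lc.ricciEndo X Y ∘ₗ hK.complexStructure := by
    ext U
    have bianchi_first := hK.lc.bianchi_first X Y (J U)
    rw [hK.lc.curv_swap Y] at bianchi_first
    refine eq_sub_of_add_eq (sub_eq_zero.1 ?_)
    rw [← bianchi_first, sub_eq_add_neg]
    exact add_right_comm _ _ _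
  rw [bianchi, frameTrace_sub hK.metric, hK.frameTrace_ricciEndo_comp_J hE,
    hK.frameTrace_ricciEndo_comp_J hE, hK.ricciForm_skew hE Y X]
  module

theorem isClosedTwoForm_ricciForm (hK : IsKaehler C J g nabla) (hE : IsParsevalFrame g E) :
    IsClosedTwoForm C fun X Y => ricci C nabla E g X (J Y) := by
  simp only [hK.ricci_J_eq_frameTrace hE]
  exact (hK.lc.isClosedTwoForm_frameTrace_curvature_comp hK.metric hE
    hK.covDeriv_complexStructure).real_smul _

end IsKaehler

end Calculus

namespace SasakianLiftData

variable {Fb Vb Fm Vm : Type*} [CommRing Fb] [Algebra ℝ Fb] [AddCommGroup Vb] [Module Fb Vb]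
  [CommRing Fm] [Algebra ℝ Fm] [AddCommGroup Vm] [Module Fm Vm]
  {Cb : VectorCalculus Fb Vb} {Cm : VectorCalculus Fm Vm} {J : Vb → Vb} {gb : Vb → Vb → Fb}

section Basic

variable (L : SasakianLiftData Cb Cm J gb)

/-- The lift `X ↦ X^L` as a map semilinear over the pullback of functions. -/
def liftHom : Vb →ₛₗ[(L.liftF : Fb →+* Fm)] Vm where
  toFun := L.liftV
  map_add' := L.liftV_add
  map_smul' := L.liftV_smul

theorem liftV_sub (X Y : Vb) : L.liftV (X - Y) = L.liftV X - L.liftV Y :=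
  L.liftHom.map_sub X Y

theorem liftV_sum {ι : Type*} (s : Finset ι) (X : ι → Vb) :
    L.liftV (∑ i ∈ s, X i) = ∑ i ∈ s, L.liftV (X i) :=
  map_sum L.liftHom X s

/-- The structure tensor `φ` as an endomorphism of the module of vector fields. -/
def phiEnd : Vm →ₗ[Fm] Vm where
  toFun := L.phi
  map_add' := L.phi_add
  map_smul' := L.phi_smul

theorem gL_xi_right (W : Vm) : L.gL W L.xi = L.eta W := by
  rw [L.gL_metric.symm, L.gL_xi]

theorem eta_smul_xi (f : Fm) : L.eta (f • L.xi) = f := by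
  rw [L.eta_smul, L.eta_xi, mul_one]

theorem bracket_lift_xi (X : Vb) : Cm.bracket (L.liftV X) L.xi = 0 := by
  rw [Cm.bracket_antisymm, L.bracket_xi_lift, neg_zero]

theorem span_insert_xi_range_liftV :
    Submodule.span Fm (insert L.xi (Set.range L.liftV)) = ⊤ := by
  refine Submodule.eq_top_iff'.2 fun W => ?_
  obtain ⟨k, a, X, hW⟩ := L.spanning W
  rw [hW]
  exact add_mem (Submodule.smul_mem _ _ (Submodule.subset_span (Set.mem_insert _ _)))
    (sum_mem fun i _ => Submodule.smul_mem _ _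
      (Submodule.subset_span (Set.mem_insert_of_mem _ (Set.mem_range_self _))))

variable {L}

theorem linearMap_ext {M : Type*} [AddCommGroup M] [Module Fm M] {S T : Vm →ₗ[Fm] M}
    (hxi : S L.xi = T L.xi) (hlift : ∀ X, S (L.liftV X) = T (L.liftV X)) : S = T :=
  LinearMap.ext_on L.span_insert_xi_range_liftV <| by
    rintro _ (rfl | ⟨X, rfl⟩)
    exacts [hxi, hlift X]

theorem eq_of_gL_eq (hsep : L.gL_metric.toBilin.SeparatingLeft) {A B : Vm}
    (heta : L.eta A = L.eta B) (hlift : ∀ Z, L.gL A (L.liftV Z) = L.gL B (L.liftV Z)) :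
    A = B := by
  have forms_eq : L.gL_metric.toBilin A = L.gL_metric.toBilin B :=
    linearMap_ext ((L.gL_xi_right A).trans (heta.trans (L.gL_xi_right B).symm)) hlift
  refine sub_eq_zero.1 (hsep _ fun W => ?_)
  rw [map_sub, forms_eq, sub_self, LinearMap.zero_apply]

variable (L) in
/-- The frame of the lift formed by the Reeb field `ξ` and the lifts of a frame of the base. -/
def liftFrame {ι : Type*} (E : ι → Vb) : Option ι → Vm :=
  fun o => o.elim L.xi fun i => L.liftV (E i)

theorem isParsevalFrame_liftFrame {ι : Type*} [Fintype ι] {E : ι → Vb}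
    (hE : IsParsevalFrame gb E) : IsParsevalFrame L.gL (L.liftFrame E) := by
  let expansion : Vm →ₗ[Fm] Vm :=
    ∑ o, (L.gL_metric.toBilin.flip (L.liftFrame E o)).smulRight (L.liftFrame E o)
  have expansion_apply (W : Vm) :
      expansion W = ∑ o, L.gL W (L.liftFrame E o) • L.liftFrame E o :=
    LinearMap.sum_apply _ _ W
  have id_eq : LinearMap.id = expansion := by
    refine linearMap_ext (L := L) ?_ fun X => ?_ <;>
      simp only [LinearMap.id_apply, expansion_apply, Fintype.sum_option, liftFrame,
        Option.elim, L.gL_xi, L.gL_xi_right, L.eta_xi, L.eta_lift, L.gL_lift]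
    · simp only [zero_smul, one_smul, Finset.sum_const_zero, add_zero]
    · simp only [zero_smul, zero_add, ← L.liftV_smul, ← L.liftV_sum, ← hE X]
  exact fun W => (LinearMap.congr_fun id_eq W).trans (expansion_apply W)

end Basic

section LeviCivita

variable {L : SasakianLiftData Cb Cm J gb} {nablab : Vb → Vb → Vb} {nablaM : Vm → Vm → Vm}

theorem nabla_lift_lift (hLC : IsLeviCivita Cm L.gL nablaM)
    (hsep : L.gL_metric.toBilin.SeparatingLeft) (hK : IsKaehler Cb J gb nablab) (X Y : Vb) :
    nablaM (L.liftV X) (L.liftV Y) =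
      L.liftV (nablab X Y) - L.liftF (gb X (J Y)) • L.xi := by
  have hg := L.gL_metric
  refine eq_of_gL_eq hsep ?_ fun Z => ?_ <;>
    apply (isUnit_two_of_algebra_real Fm).mul_left_cancel
  · rw [← L.gL_xi_right, hLC.koszul hg, ← L.gL_xi_right]
    simp only [L.bracket_lift, L.bracket_lift_xi, hg.sub_left, hg.smul_left, hg.zero_left,
      L.gL_xi_right, L.eta_lift, L.eta_xi, L.gL_lift, L.deriv_xi, Cm.deriv_zero]
    ring
  · have koszul := congrArg L.liftF (hK.lc.koszul hK.metric X Y Z)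
    simp only [map_add, map_sub, map_mul, map_ofNat] at koszul
    rw [hLC.koszul hg]
    simp only [L.bracket_lift, hg.sub_left, hg.smul_left, L.gL_xi, L.eta_lift, L.gL_lift,
      L.deriv_lift]
    linear_combination -koszul

theorem nabla_lift_xi (hLC : IsLeviCivita Cm L.gL nablaM)
    (hsep : L.gL_metric.toBilin.SeparatingLeft) (hK : IsKaehler Cb J gb nablab) (X : Vb) :
    nablaM (L.liftV X) L.xi = -L.liftV (J X) := by
  have hg := L.gL_metric
  refine eq_of_gL_eq hsep ?_ fun Z => ?_ <;>
    apply (isUnit_two_of_algebra_real Fm).mul_left_cancel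
  · rw [← L.gL_xi_right, hLC.koszul hg, ← L.gL_xi_right]
    simp only [L.bracket_lift_xi, Cm.bracket_self, hg.neg_left, hg.zero_left, L.gL_xi_right,
      L.eta_lift, L.eta_xi, Cm.deriv_zero, Cm.deriv_one]
    ring
  · rw [hLC.koszul hg]
    simp only [L.bracket_lift, L.bracket_lift_xi, L.bracket_xi_lift, hg.sub_left, hg.smul_left,
      hg.neg_left, hg.zero_left, L.gL_xi, L.gL_xi_right, L.eta_lift, L.eta_xi, L.gL_lift,
      L.deriv_xi, Cm.deriv_zero, hK.metric_J_right, map_neg]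
    ring

theorem nabla_xi_lift (hLC : IsLeviCivita Cm L.gL nablaM)
    (hsep : L.gL_metric.toBilin.SeparatingLeft) (hK : IsKaehler Cb J gb nablab) (X : Vb) :
    nablaM L.xi (L.liftV X) = -L.liftV (J X) := by
  rw [← nabla_lift_xi hLC hsep hK, ← sub_eq_zero, hLC.torsion_free, L.bracket_xi_lift]

theorem nabla_xi_xi (hLC : IsLeviCivita Cm L.gL nablaM)
    (hsep : L.gL_metric.toBilin.SeparatingLeft) : nablaM L.xi L.xi = 0 := by
  have hg := L.gL_metric
  refine eq_of_gL_eq hsep ?_ fun Z => ?_ <;>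
    apply (isUnit_two_of_algebra_real Fm).mul_left_cancel
  · rw [← L.gL_xi_right, hLC.koszul hg, ← L.gL_xi_right]
    simp only [Cm.bracket_self, hg.zero_left, L.gL_xi, L.eta_xi, Cm.deriv_one]
    ring
  · rw [hLC.koszul hg]
    simp only [L.bracket_xi_lift, Cm.bracket_self, hg.zero_left, L.gL_xi, L.eta_lift, L.eta_xi,
      Cm.deriv_zero, Cm.deriv_one]
    ring

theorem nabla_lift_nabla_lift_lift (hLC : IsLeviCivita Cm L.gL nablaM)
    (hsep : L.gL_metric.toBilin.SeparatingLeft) (hK : IsKaehler Cb J gb nablab) (X Y Z : Vb) :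
    nablaM (L.liftV X) (nablaM (L.liftV Y) (L.liftV Z)) =
      L.liftV (nablab X (nablab Y Z) + gb Y (J Z) • J X)
        - L.liftF (gb X (J (nablab Y Z)) + gb Y (J (nablab X Z)) + gb (nablab X Y) (J Z)) •
          L.xi := by
  simp only [hLC.sub_right, hLC.leibniz, nabla_lift_lift hLC hsep hK, nabla_lift_xi hLC hsep hK,
    L.deriv_lift, hK.deriv_kaehlerForm, L.liftV_add, L.liftV_smul, map_add]
  module

-- The `ξ`-components cancel because the Kähler form is parallel and `∇` is torsion-free.
theorem curv_lift_lift_lift (hLC : IsLeviCivita Cm L.gL nablaM)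
    (hsep : L.gL_metric.toBilin.SeparatingLeft) (hK : IsKaehler Cb J gb nablab) (X Y Z : Vb) :
    curv Cm nablaM (L.liftV X) (L.liftV Y) (L.liftV Z) =
      L.liftV (curv Cb nablab X Y Z + gb Y (J Z) • J X - gb X (J Z) • J Y
        - (2 * gb X (J Y)) • J Z) := by
  have nabla_bracket : nablaM (Cm.bracket (L.liftV X) (L.liftV Y)) (L.liftV Z) =
      L.liftV (nablab (Cb.bracket X Y) Z + (2 * gb X (J Y)) • J Z)
        - L.liftF (gb (nablab X Y) (J Z) - gb (nablab Y X) (J Z)) • L.xi := by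
    rw [← hK.metric.sub_left, hK.lc.torsion_free]
    simp only [L.bracket_lift, hLC.sub_left, hLC.smul_left, nabla_lift_lift hLC hsep hK,
      nabla_xi_lift hLC hsep hK, L.liftV_add, L.liftV_smul, map_mul, map_ofNat]
    module
  rw [curv, nabla_lift_nabla_lift_lift hLC hsep hK, nabla_lift_nabla_lift_lift hLC hsep hK,
    nabla_bracket, curv]
  simp only [L.liftV_sub, L.liftV_add, L.liftV_smul, map_add, map_sub]
  module

theorem curv_xi_lift_lift (hLC : IsLeviCivita Cm L.gL nablaM)
    (hsep : L.gL_metric.toBilin.SeparatingLeft) (hK : IsKaehler Cb J gb nablab) (Y Z : Vb) :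
    curv Cm nablaM L.xi (L.liftV Y) (L.liftV Z) = L.liftF (gb Y Z) • L.xi := by
  simp only [curv, L.bracket_xi_lift, hLC.zero_left, hLC.neg_right, hLC.sub_right, hLC.leibniz,
    nabla_lift_lift hLC hsep hK, nabla_xi_lift hLC hsep hK, nabla_xi_xi hLC hsep,
    L.deriv_xi, hK.J_sq, hK.parallel, hK.metric.neg_right, map_neg]
  module

variable {m k : ℕ} {Eb : Fin m → Vb} {Em : Fin k → Vm}

theorem ricci_eq_frameTrace_liftFrame (hLC : IsLeviCivita Cm L.gL nablaM)
    (hEb : IsParsevalFrame gb Eb) (hEm : IsParsevalFrame L.gL Em) (W W' : Vm) :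
    ricci Cm nablaM Em L.gL W W' =
      L.eta (curv Cm nablaM L.xi W W')
        + ∑ i, L.gL (curv Cm nablaM (L.liftV (Eb i)) W W') (L.liftV (Eb i)) := by
  rw [hLC.ricci_eq_frameTrace,
    hEm.frameTrace_eq (isParsevalFrame_liftFrame hEb) L.gL_metric, frameTrace,
    Fintype.sum_option, ← L.gL_xi_right]
  rfl

theorem ricci_lift_lift (hLC : IsLeviCivita Cm L.gL nablaM) (hK : IsKaehler Cb J gb nablab)
    (hEb : IsParsevalFrame gb Eb) (hEm : IsParsevalFrame L.gL Em) (Y Z : Vb) :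
    ricci Cm nablaM Em L.gL (L.liftV Y) (L.liftV Z) =
      L.liftF (ricci Cb nablab Eb gb Y Z - 2 * gb Y Z) := by
  have hsep := hEm.separatingLeft L.gL_metric
  have trace_J_J (U U' : Vb) : ∑ i, gb (Eb i) (J U) * gb (J U') (Eb i) = gb U' U := by
    rw [hEb.sum_mul hK.metric, hK.hermitian]
  have horizontal : ∑ i, gb (curv Cb nablab (Eb i) Y Z + gb Y (J Z) • J (Eb i)
        - gb (Eb i) (J Z) • J Y - (2 * gb (Eb i) (J Y)) • J Z) (Eb i) =
      ricci Cb nablab Eb gb Y Z - gb Y Z - 2 * gb Z Y := by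
    simp only [hK.metric.sub_left, hK.metric.add_left, hK.metric.smul_left, hK.metric_J_self,
      mul_zero, add_zero, Finset.sum_sub_distrib, mul_assoc, ← Finset.mul_sum, trace_J_J]
    rfl
  rw [ricci_eq_frameTrace_liftFrame hLC hEb hEm, curv_xi_lift_lift hLC hsep hK, L.eta_smul_xi]
  simp only [curv_lift_lift_lift hLC hsep hK, L.gL_lift]
  rw [← map_sum, horizontal, ← map_add, hK.metric.symm Z Y]
  congr 1
  ring

theorem ricci_xi_lift (hLC : IsLeviCivita Cm L.gL nablaM) (hK : IsKaehler Cb J gb nablab)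
    (hEb : IsParsevalFrame gb Eb) (hEm : IsParsevalFrame L.gL Em) (Z : Vb) :
    ricci Cm nablaM Em L.gL L.xi (L.liftV Z) = 0 := by
  have hsep := hEm.separatingLeft L.gL_metric
  have hg := L.gL_metric
  have curv_xi_xi : curv Cm nablaM L.xi L.xi (L.liftV Z) = 0 := by
    rw [curv, sub_self, Cm.bracket_self, hLC.zero_left, sub_zero]
  rw [ricci_eq_frameTrace_liftFrame hLC hEb hEm, curv_xi_xi, ← L.gL_xi_right, hg.zero_left,
    zero_add]
  refine Finset.sum_eq_zero fun i _ => ?_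
  rw [hLC.curv_swap, curv_xi_lift_lift hLC hsep hK, hg.neg_left, hg.smul_left, L.gL_xi,
    L.eta_lift, mul_zero, neg_zero]

end LeviCivita

section Pullback

/-- A 2-form `Θ` on the lift is the pullback `π₂*θ` of a 2-form `θ` on the base: it annihilates `ξ`
and restricts to `θ` on lifts. -/
structure IsPullback (L : SasakianLiftData Cb Cm J gb) (Θ : LinearMap.BilinForm Fm Vm)
    (θ : Vb → Vb → Fb) : Prop where
  xi_left : ∀ W, Θ L.xi W = 0
  xi_right : ∀ W, Θ W L.xi = 0
  lift : ∀ X Y, Θ (L.liftV X) (L.liftV Y) = L.liftF (θ X Y)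

namespace IsPullback

variable {L : SasakianLiftData Cb Cm J gb} {Θ : LinearMap.BilinForm Fm Vm} {θ : Vb → Vb → Fb}

theorem skew (h : L.IsPullback Θ θ) (hθ : ∀ X Y, θ X Y = -θ Y X) (W W' : Vm) :
    Θ W W' = -Θ W' W := by
  have form_eq : Θ = -Θ.flip := by
    refine linearMap_ext (L := L) (LinearMap.ext fun W => ?_) fun X =>
      linearMap_ext (L := L) ?_ fun Y => ?_ <;>
      simp only [LinearMap.neg_apply, LinearMap.BilinForm.flip_apply, h.xi_left, h.xi_right,
        h.lift, neg_zero]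
    rw [hθ, map_neg]
  exact LinearMap.congr_fun₂ form_eq W W'

theorem isClosedTwoForm (h : L.IsPullback Θ θ) (hθ : ∀ X Y, θ X Y = -θ Y X)
    (hclosed : IsClosedTwoForm Cb θ) : IsClosedTwoForm Cm fun W W' => Θ W W' := by
  refine isClosedTwoForm_of_span Cm (h.skew hθ) L.span_insert_xi_range_liftV ?_
  rintro _ (rfl | ⟨X, rfl⟩) _ (rfl | ⟨Y, rfl⟩) _ (rfl | ⟨Z, rfl⟩) <;>
    simp only [extDerivTwoForm, h.xi_left, h.xi_right, h.lift, Cm.bracket_self,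
      L.bracket_lift, L.bracket_lift_xi, L.bracket_xi_lift, L.deriv_xi, L.deriv_lift,
      Cm.deriv_zero, map_sub, map_smul, map_zero, LinearMap.sub_apply, LinearMap.smul_apply,
      LinearMap.zero_apply, smul_zero, sub_zero, add_zero]
  simpa only [map_add, map_sub, map_zero] using congrArg L.liftF (hclosed X Y Z)

end IsPullback

theorem isPullback_ricciForm {L : SasakianLiftData Cb Cm J gb} {nablab : Vb → Vb → Vb}
    {nablaM : Vm → Vm → Vm} (hLC : IsLeviCivita Cm L.gL nablaM)
    (hK : IsKaehler Cb J gb nablab) {m k : ℕ} {Eb : Fin m → Vb} (hEb : IsParsevalFrame gb Eb)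
    {Em : Fin k → Vm} (hEm : IsParsevalFrame L.gL Em) :
    L.IsPullback ((hLC.ricciForm L.gL_metric Em).compl₂ L.phiEnd)
      fun X Y => ricci Cb nablab Eb gb X (J Y) - 2 * gb X (J Y) where
  xi_left := LinearMap.congr_fun <| linearMap_ext (L := L) (T := 0)
    (by
      rw [LinearMap.compl₂_apply, show L.phiEnd L.xi = 0 from L.phi_xi, map_zero,
        LinearMap.zero_apply])
    fun X => by
      rw [LinearMap.compl₂_apply, show L.phiEnd (L.liftV X) = _ from L.phi_lift X,
        hLC.ricciForm_apply, ricci_xi_lift hLC hK hEb hEm, LinearMap.zero_apply]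
  xi_right W := by
    rw [LinearMap.compl₂_apply, show L.phiEnd L.xi = 0 from L.phi_xi, map_zero]
  lift X Y := by
    rw [LinearMap.compl₂_apply, show L.phiEnd (L.liftV Y) = _ from L.phi_lift Y,
      hLC.ricciForm_apply, ricci_lift_lift hLC hK hEb hEm]

end Pullback

end SasakianLiftData

theorem sasakian_lift_ricci_form_general
    {Fb Vb Fm Vm : Type*} [CommRing Fb] [Algebra ℝ Fb]
    [AddCommGroup Vb] [Module Fb Vb]
    [CommRing Fm] [Algebra ℝ Fm] [AddCommGroup Vm] [Module Fm Vm]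
    (Cb : VectorCalculus Fb Vb) (Cm : VectorCalculus Fm Vm)
    (J : Vb → Vb) (gb : Vb → Vb → Fb) (nablab : Vb → Vb → Vb)
    (hK : IsKaehler Cb J gb nablab)
    (L : SasakianLiftData Cb Cm J gb)
    (nablaM : Vm → Vm → Vm) (hLC : IsLeviCivita Cm L.gL nablaM)
    {m k : ℕ} (Eb : Fin m → Vb) (hEb : IsParsevalFrame gb Eb)
    (Em : Fin k → Vm) (hEm : IsParsevalFrame L.gL Em) :
    (∀ W W' : Vm, ricci Cm nablaM Em L.gL W (L.phi W')
        = - ricci Cm nablaM Em L.gL W' (L.phi W)) ∧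
    IsClosedTwoForm Cm (fun W W' => ricci Cm nablaM Em L.gL W (L.phi W')) ∧
    (∀ X Y : Vb,
      ricci Cm nablaM Em L.gL (L.liftV X) (L.phi (L.liftV Y))
        = L.liftF (ricci Cb nablab Eb gb X (J Y)) - (2 : Fm) * L.liftF (gb X (J Y))) ∧
    (∀ W : Vm, ricci Cm nablaM Em L.gL L.xi (L.phi W) = 0) := by
  have pullback := SasakianLiftData.isPullback_ricciForm hLC hK hEb hEm
  have base_skew (X Y : Vb) : ricci Cb nablab Eb gb X (J Y) - 2 * gb X (J Y) =
      -(ricci Cb nablab Eb gb Y (J X) - 2 * gb Y (J X)) := by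
    rw [hK.ricciForm_skew hEb X Y, hK.kaehlerForm_skew X Y, mul_neg, neg_sub_neg, neg_sub]
  have base_closed :
      IsClosedTwoForm Cb fun X Y => ricci Cb nablab Eb gb X (J Y) - 2 * gb X (J Y) := by
    simpa only [ofNat_smul_eq_nsmul, nsmul_eq_mul, Nat.cast_ofNat] using
      (hK.isClosedTwoForm_ricciForm hEb).sub (hK.isClosedTwoForm_kaehlerForm.real_smul 2)
  have lift_ricciForm (W W' : Vm) : (hLC.ricciForm L.gL_metric Em).compl₂ L.phiEnd W W' =
      ricci Cm nablaM Em L.gL W (L.phi W') :=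
    hLC.ricciForm_apply L.gL_metric Em W (L.phi W')
  simp only [← lift_ricciForm]
  refine ⟨pullback.skew base_skew, pullback.isClosedTwoForm base_skew base_closed, fun X Y => ?_,
    pullback.xi_left⟩
  rw [pullback.lift, map_sub, map_mul, map_ofNat]

/-- On the Sasakian lift, `ρ̄(·,·) = R̄ic(·, φ·)` is a closed
2-form and `ρ̄ = π₂*ρ - 2 π₂*ω`: it is skew-symmetric, closed, on lifts it equals
the pullback of `ρ(X,Y) = Ric(X,JY)` minus twice the pullback of the Kähler form
`ω(X,Y) = g(X,JY)`, and it annihilates `ξ`. -/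
theorem sasakian_lift_ricci_form
    {Fb Vb Fm Vm : Type*} [CommRing Fb] [Algebra ℝ Fb]
    [AddCommGroup Vb] [Module Fb Vb]
    [CommRing Fm] [Algebra ℝ Fm] [AddCommGroup Vm] [Module Fm Vm]
    (Cb : VectorCalculus Fb Vb) (Cm : VectorCalculus Fm Vm)
    (J : Vb → Vb) (gb : Vb → Vb → Fb) (nablab : Vb → Vb → Vb)
    (hK : IsKaehler Cb J gb nablab)
    (L : SasakianLiftData Cb Cm J gb)
    (nablaM : Vm → Vm → Vm) (hLC : IsLeviCivita Cm L.gL nablaM)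
    (n : ℕ) (hn : 1 ≤ n)
    (Eb : Fin (2*n) → Vb) (hEb : IsOrthFrame gb Eb)
    (Em : Fin (2*n+1) → Vm) (hEm : IsOrthFrame L.gL Em) :
    (∀ W W' : Vm, ricci Cm nablaM Em L.gL W (L.phi W')
        = - ricci Cm nablaM Em L.gL W' (L.phi W)) ∧
    IsClosedTwoForm Cm (fun W W' => ricci Cm nablaM Em L.gL W (L.phi W')) ∧
    (∀ X Y : Vb,
      ricci Cm nablaM Em L.gL (L.liftV X) (L.phi (L.liftV Y))
        = L.liftF (ricci Cb nablab Eb gb X (J Y)) - (2 : Fm) * L.liftF (gb X (J Y))) ∧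
    (∀ W : Vm, ricci Cm nablaM Em L.gL L.xi (L.phi W) = 0) :=
  sasakian_lift_ricci_form_general Cb Cm J gb nablab hK L nablaM hLC Eb hEb.2 Em hEm.2
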